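/- J satisfies the functional equations of the Möbius maps x ↦ 1/(1+x) and x ↦ x/(1+x): for every a = (n_1,…,n_k) ∈ X, θ(J(1,n_1,n_2,…,n_k)) = θ(J(a))/(1+θ(J(a))) and θ(J(n_1+1,n_2,…,n_k)) = 1/(1+θ(J(a))). (Here (1,n_1,…,n_k) is the tuple with θ-value 1/(1+θ(a)) and (n_1+1,n_2,…,n_k) is the tuple with θ-value θ(a)/(1+θ(a)).) -/

import Mathlib

/-- Finite continued fraction `[0; n₁, …, n_k] = 1/(n₁ + 1/(n₂ + ⋯ + 1/n_k))`,
with the empty tuple giving `0`. -/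
def cf : List ℕ → ℚ
  | [] => 0
  | n :: t => 1 / (n + cf t)

/-- `theta (n₁, …, n_k) = [0; n₁, …, n_k, 1]`. -/
def theta (a : List ℕ) : ℚ := cf (a ++ [1])

/-- Membership in `X`: a nonempty tuple of positive integers. -/
def IsX (a : List ℕ) : Prop := a ≠ [] ∧ ∀ n ∈ a, 0 < n

/-- The monoid operation `⋆` on `X` (concatenation of paths in the Farey tree),
with the zero-elimination rules `(…, m, 0, n, …) = (…, m + n, …)` and a trailing
zero dropped, built into the definition. -/
def star (x y : List ℕ) : List ℕ :=
  match y with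
  | [] => x
  | m :: rest =>
    if x.length % 2 = 0 then
      if m = 1 then
        match rest with
        | [] => x
        | m2 :: rest2 => x.dropLast ++ (x.getLastD 0 + m2) :: rest2
      else x ++ (m - 1) :: rest
    else x.dropLast ++ (x.getLastD 0 + m - 1) :: rest

/-- The involution `K`: `K(1) = (1)`, `K(1, n₂, …, n_k) = (n₂+1, n₃, …, n_k)`,
and `K(n₁, …, n_k) = (1, n₁−1, n₂, …, n_k)` for `n₁ ≥ 2`. -/
def K : List ℕ → List ℕ
  | [] => []
  | [1] => [1]
  | 1 :: n :: rest => (n + 1) :: rest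
  | n :: rest => 1 :: (n - 1) :: rest

/-- The Farey map on tuples: `(n₁, …, n_k) ↦ (n₁ − 1, n₂, …, n_k)` if `n₁ ≥ 2`,
and `(1, n₂, …, n_k) ↦ (n₂, …, n_k)`. -/
def TF : List ℕ → List ℕ
  | [] => []
  | 1 :: rest => rest
  | n :: rest => (n - 1) :: rest

/-- The flipped Farey map (parent map in the Farey tree):
`(n₁, …, n_k) ↦ (n₁, …, n_k − 1)`, a trailing zero being dropped. -/
def TpF (a : List ℕ) : List ℕ := (TF a.reverse).reverse

/-- Auxiliary: continuant computed from the front. -/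
def contAux : List ℕ → ℕ
  | [] => 1
  | [n] => n
  | n :: m :: rest => n * contAux (m :: rest) + contAux rest

/-- The continuant `⟨n₁, …, n_k⟩`: `⟨⟩ = 1`, `⟨n₁⟩ = n₁`,
`⟨n₁, …, n_k⟩ = n_k ⟨n₁, …, n_{k−1}⟩ + ⟨n₁, …, n_{k−2}⟩`. -/
def cont (a : List ℕ) : ℕ := contAux a.reverse

/-- Length of the Farey interval `I(a)`, the interval with endpoints
`[0; n₁, …, n_{k−1}]` and `[0; n₁, …, n_k]`. -/
def ilen (a : List ℕ) : ℚ := |cf a - cf a.dropLast|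

/-- Auxiliary for `J`: process the middle entries `n₂, …, n_{k−1}`, keeping the
output built so far in reversed order; an entry `n ≥ 2` contributes the block
`1_{n−2}, 2`, while an entry `n = 1` contributes `1_{−1}, 2`, which is resolved
by the rule `(…, m, 1_{−1}, 2, …) = (…, m + 1, …)`. -/
def Jmid : List ℕ → List ℕ → List ℕ
  | [], out => out
  | n :: rest, out =>
    if n = 1 then
      Jmid rest (match out with
        | [] => [1]
        | h :: t => (h + 1) :: t)
    else
      Jmid rest (2 :: (List.replicate (n - 2) 1 ++ out))

/-- Dyer's involution `J` (jimm) on tuples: `J(n₁) = 1_{n₁}` and, for `k ≥ 2`,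
`J(n₁, …, n_k) = (1_{n₁−1}, 2, 1_{n₂−2}, 2, …, 1_{n_{k−1}−2}, 2, 1_{n_k−1})`,
with `1_0` deleted and `1_{−1}` resolved by `(…, m, 1_{−1}, n, …) = (…, m+n−1, …)`. -/
def J : List ℕ → List ℕ
  | [] => []
  | [n] => List.replicate n 1
  | n :: rest =>
      (Jmid rest.dropLast (2 :: List.replicate (n - 1) 1)).reverse
        ++ List.replicate (rest.getLastD 1 - 1) 1

theorem cf_nonneg' (l : List ℕ) : 0 ≤ cf l := by
  induction l with
  | nil => simp [cf]
  | cons n t ih => simp only [cf]; positivity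

theorem theta_incr (h : ℕ) (t : List ℕ) (hh : 0 < h) :
    theta ((h + 1) :: t) = theta (h :: t) / (1 + theta (h :: t)) := by
  have h1 := cf_nonneg' (t ++ [1])
  have h2 : (0 : ℚ) < h := by exact_mod_cast hh
  simp only [theta, List.cons_append, cf]
  push_cast
  have h3 : (h : ℚ) + cf (t ++ [1]) ≠ 0 := by positivity
  have h4 : (h : ℚ) + 1 + cf (t ++ [1]) ≠ 0 := by positivity
  have h5 : (h : ℚ) + cf (t ++ [1]) + 1 ≠ 0 := by positivity
  field_simp
  ring

theorem theta_one (t : List ℕ) : theta (1 :: t) = 1 / (1 + theta t) := by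
  simp [theta, cf]

theorem Jmid_append (l : List ℕ) : ∀ (x : ℕ) (out t : List ℕ),
    Jmid l (x :: (out ++ t)) = Jmid l (x :: out) ++ t := by
  induction l with
  | nil => intros; simp [Jmid]
  | cons n rest ih =>
    intro x out t
    simp only [Jmid]
    split_ifs
    · exact ih _ _ _
    · rw [← ih]; simp

theorem Jmid_incr (l : List ℕ) : ∀ h : ℕ, 0 < h → ∃ p g, 0 < g ∧
    Jmid l [h] = p ++ [g] ∧ Jmid l [h + 1] = p ++ [g + 1] := by
  induction l with
  | nil => intro h hh; exact ⟨[], h, hh, by simp [Jmid], by simp [Jmid]⟩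
  | cons n rest ih =>
    intro h hh
    simp only [Jmid]
    split_ifs
    · exact ih (h + 1) (by omega)
    · exact ⟨_, h, hh, Jmid_append rest 2 _ [h], Jmid_append rest 2 _ [h + 1]⟩

theorem J_succ (n : ℕ) (rest : List ℕ) (hn : 0 < n) :
    J ((n + 1) :: rest) = 1 :: J (n :: rest) := by
  obtain ⟨m, rfl⟩ : ∃ m, n = m + 1 := ⟨n - 1, by omega⟩
  cases rest with
  | nil => simp [J, List.replicate_succ]
  | cons b r =>
    simp only [J, Nat.add_sub_cancel]
    rw [List.replicate_succ', Jmid_append]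
    simp

theorem J_one (n : ℕ) (rest : List ℕ) (hn : 0 < n) : ∃ g t, 0 < g ∧
    J (n :: rest) = g :: t ∧ J (1 :: n :: rest) = (g + 1) :: t := by
  obtain ⟨m, rfl⟩ : ∃ m, n = m + 1 := ⟨n - 1, by omega⟩
  cases rest with
  | nil => exact ⟨1, List.replicate m 1, by simp [J, Jmid, List.replicate_succ]⟩
  | cons b r =>
    cases m with
    | zero =>
      obtain ⟨p, g, hg, h1, h2⟩ := Jmid_incr (b :: r).dropLast 2 (by norm_num)
      refine ⟨g, p.reverse ++ List.replicate ((b :: r).getLastD 1 - 1) 1, hg, ?_, ?_⟩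
      · simp only [J]; simp [h1]
      · simp only [J, List.dropLast_cons_cons, Jmid]
        simp at h2
        simp [h2]
    | succ k =>
      refine ⟨1, (Jmid (b :: r).dropLast (2 :: List.replicate k 1)).reverse ++
        List.replicate ((b :: r).getLastD 1 - 1) 1, by norm_num, ?_, ?_⟩
      · rw [J_succ _ _ (by omega)]; simp [J]
      · simp only [J, List.dropLast_cons_cons, Jmid]
        rw [if_neg (by omega)]
        simp [Jmid_append]

/-- `J` satisfies the functional equations of the Möbius maps `x ↦ 1/(1+x)` and
`x ↦ x/(1+x)`: for `a = (n₁, …, n_k) ∈ X`,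
`θ(J(1, n₁, …, n_k)) = θ(J a) / (1 + θ(J a))` and
`θ(J(n₁ + 1, n₂, …, n_k)) = 1 / (1 + θ(J a))`. -/
theorem J_functional_equations (n : ℕ) (rest : List ℕ) (h : IsX (n :: rest)) :
    theta (J (1 :: n :: rest)) = theta (J (n :: rest)) / (1 + theta (J (n :: rest))) ∧
    theta (J ((n + 1) :: rest)) = 1 / (1 + theta (J (n :: rest))) := by
  have hn : 0 < n := h.2 n (by simp)
  constructor
  · obtain ⟨g, t, hg, h1, h2⟩ := J_one n rest hn
    rw [h1, h2, theta_incr g t hg]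
  · rw [J_succ n rest hn, theta_one]
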